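/- Let T be a tree. Then the following statements are equivalent: (i) the ultrametric space (V(T), d_l) is separable for every non-degenerate labeling l : V(T) → ℝ≥0; (ii) there exists a non-degenerate labeling l : V(T) → ℝ≥0 for which the ultrametric space (V(T), d_l) is locally finite; (iii) there exists a non-degenerate labeling l : V(T) → ℝ≥0 for which the ultrametric space (V(T), d_l) is separable. -/

import Mathlib

open SimpleGraph

/-- For a tree `G` with labeling `l`, the "ultrametric" `d_l`: the maximum of the labels of the
vertices of the unique path joining `u` and `v` (and `0` if `u = v`). -/
noncomputable def treeDist {V : Type*} (G : SimpleGraph V) (hG : G.IsTree) (l : V → NNReal)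
    (u v : V) : NNReal :=
  letI := Classical.decEq V
  if u = v then 0 else ((hG.existsUnique_path u v).choose.support.map l).foldr max 0

/-- A labeling is non-degenerate if `max {l u, l v} > 0` for every edge `{u, v}`. -/
def Nondeg {V : Type*} (G : SimpleGraph V) (l : V → NNReal) : Prop :=
  ∀ u v : V, G.Adj u v → 0 < max (l u) (l v)

/-- A distance function is separable if there is a countable dense subset. -/
def SeparableWith {α : Type*} (d : α → α → NNReal) : Prop :=
  ∃ S : Set α, S.Countable ∧ ∀ x : α, ∀ ε : NNReal, 0 < ε → ∃ s ∈ S, d x s < ε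

/-- A set is bounded if it is contained in a closed ball of positive radius. -/
def BoundedWith {α : Type*} (d : α → α → NNReal) (A : Set α) : Prop :=
  ∃ c : α, ∃ r : NNReal, 0 < r ∧ ∀ x ∈ A, d c x ≤ r

/-- A distance function is locally finite if every bounded set is finite. -/
def LocallyFiniteWith {α : Type*} (d : α → α → NNReal) : Prop :=
  ∀ A : Set α, BoundedWith d A → A.Finite

/-- A graph is a ray if its vertices can be enumerated without repetition as
`x₁, x₂, …` with edges exactly `{xₙ, xₙ₊₁}`. -/
def IsRay {W : Type*} (R : SimpleGraph W) : Prop :=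
  ∃ v : ℕ → W, Function.Bijective v ∧
    ∀ a b : W, R.Adj a b ↔ ∃ n : ℕ, (a = v n ∧ b = v (n + 1)) ∨ (a = v (n + 1) ∧ b = v n)

/-- A tree is a star graph if some vertex `c` (the center) is adjacent to every other vertex. -/
def IsStar {W : Type*} (S : SimpleGraph W) : Prop :=
  S.IsTree ∧ ∃ c : W, ∀ v : W, v ≠ c → S.Adj c v

theorem le_foldr_max_of_mem (L : List NNReal) (a : NNReal) (h : a ∈ L) :
    a ≤ L.foldr max 0 := by
  induction L with
  | nil => simp at h
  | cons b L ih =>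
    rw [List.foldr_cons]
    rcases List.mem_cons.1 h with rfl | h
    · exact le_max_left _ _
    · exact (ih h).trans (le_max_right _ _)

theorem treeDist_self {V : Type*} (G : SimpleGraph V) (hG : G.IsTree) (l : V → NNReal) (u : V) :
    treeDist G hG l u u = 0 := by
  simp [treeDist]

theorem le_treeDist {V : Type*} (G : SimpleGraph V) (hG : G.IsTree) (l : V → NNReal) {u v : V}
    (huv : u ≠ v) (w : V) (hw : w ∈ (hG.existsUnique_path u v).choose.support) :
    l w ≤ treeDist G hG l u v := by
  unfold treeDist
  rw [if_neg huv]
  exact le_foldr_max_of_mem _ _ (List.mem_map_of_mem hw)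

theorem countable_of_separable {V : Type*} (G : SimpleGraph V) (hG : G.IsTree) (l : V → NNReal)
    (hl : Nondeg G l) (hs : SeparableWith (treeDist G hG l)) : Countable V := by
  rcases subsingleton_or_nontrivial V with hV | hV
  · infer_instance
  obtain ⟨S, hS, hd⟩ := hs
  have hpos : ∀ x, 0 < l x → x ∈ S := by
    intro x hx
    obtain ⟨s, hsS, hlt⟩ := hd x (l x) hx
    by_cases h : x = s
    · exact h ▸ hsS
    · exact absurd hlt (not_lt.2 (le_treeDist G hG l h x (Walk.start_mem_support _)))
  have hcov : (Set.univ : Set V) ⊆ S ∪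
      (fun q : V × V => (hG.existsUnique_path q.1 q.2).choose.snd) '' (S ×ˢ S) := by
    intro x _
    by_cases hxS : x ∈ S
    · exact Or.inl hxS
    right
    obtain ⟨p, hp⟩ := hG.1.preconnected.exists_adj_of_nontrivial x
    have hx0 : l x = 0 := by
      by_contra h
      exact hxS (hpos x (pos_iff_ne_zero.2 h))
    have hlp : 0 < l p := by
      have := hl x p hp
      rw [hx0] at this
      simpa using this
    obtain ⟨s, hsS, hlt⟩ := hd x (l p) hlp
    have hxs : x ≠ s := fun h => hxS (h ▸ hsS)
    have hns : p ∉ (hG.existsUnique_path x s).choose.support := fun h =>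
      absurd hlt (not_lt.2 (le_treeDist G hG l hxs p h))
    refine ⟨(p, s), ⟨hpos p hlp, hsS⟩, ?_⟩
    have hpath : (Walk.cons hp.symm (hG.existsUnique_path x s).choose).IsPath :=
      (hG.existsUnique_path x s).choose_spec.1.cons hns
    have := (hG.existsUnique_path p s).choose_spec.2 _ hpath
    show (hG.existsUnique_path p s).choose.snd = x
    rw [← this]
    simp
  have : (Set.univ : Set V).Countable := (hS.union ((hS.prod hS).image _)).mono hcov
  exact Set.countable_univ_iff.1 this

theorem separable_of_countable {V : Type*} (G : SimpleGraph V) (hG : G.IsTree) (l : V → NNReal)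
    [Countable V] : SeparableWith (treeDist G hG l) :=
  ⟨Set.univ, Set.countable_univ, fun x ε hε => ⟨x, trivial, by rwa [treeDist_self]⟩⟩

theorem countable_of_locallyFinite {V : Type*} (d : V → V → NNReal) (h : LocallyFiniteWith d) :
    Countable V := by
  rcases isEmpty_or_nonempty V with hV | ⟨⟨c⟩⟩
  · infer_instance
  have : (⋃ n : ℕ, {x | d c x ≤ (n : NNReal) + 1}) = Set.univ := by
    ext x
    simp only [Set.mem_iUnion, Set.mem_ofPred_eq, Set.mem_univ, iff_true]
    obtain ⟨n, hn⟩ := exists_nat_ge (d c x)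
    exact ⟨n, hn.trans (by simp)⟩
  rw [← Set.countable_univ_iff, ← this]
  exact Set.countable_iUnion fun n => (h _ ⟨c, (n : NNReal) + 1, by positivity, fun x hx => hx⟩).countable

theorem exists_locallyFinite {V : Type*} (G : SimpleGraph V) (hG : G.IsTree) [Countable V] :
    ∃ l : V → NNReal, Nondeg G l ∧ LocallyFiniteWith (treeDist G hG l) := by
  obtain ⟨f, hf⟩ := exists_injective_nat V
  refine ⟨fun v => (f v : NNReal) + 1, fun u v _ => lt_max_of_lt_left (by positivity), ?_⟩
  rintro A ⟨c, r, _, hA⟩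
  obtain ⟨n, hn⟩ := exists_nat_ge r
  have hfin : ({c} ∪ f ⁻¹' (Set.Iic n)).Finite :=
    (Set.finite_singleton c).union ((Set.finite_Iic n).preimage hf.injOn)
  refine hfin.subset fun x hx => ?_
  by_cases h : c = x
  · exact Or.inl h.symm
  right
  have h1 := le_treeDist G hG (fun v => (f v : NNReal) + 1) h x (Walk.end_mem_support _)
  have h2 : (f x : NNReal) ≤ n :=
    (le_self_add.trans h1).trans ((hA x hx).trans hn)
  exact_mod_cast h2

theorem forall_separable_iff_exists_locallyFinite_iff_exists_separable {V : Type*}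
    (G : SimpleGraph V) (hG : G.IsTree) :
    ((∀ l : V → NNReal, Nondeg G l → SeparableWith (treeDist G hG l)) ↔
      ∃ l : V → NNReal, Nondeg G l ∧ LocallyFiniteWith (treeDist G hG l)) ∧
    ((∀ l : V → NNReal, Nondeg G l → SeparableWith (treeDist G hG l)) ↔
      ∃ l : V → NNReal, Nondeg G l ∧ SeparableWith (treeDist G hG l)) := by
  have h1 : Nondeg G (fun _ => 1) := fun u v _ => by simp
  refine ⟨⟨fun h => ?_, ?_⟩, ⟨fun h => ⟨_, h1, h _ h1⟩, ?_⟩⟩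
  · haveI := countable_of_separable G hG _ h1 (h _ h1)
    exact exists_locallyFinite G hG
  · rintro ⟨l, _, h⟩ l' _
    haveI := countable_of_locallyFinite _ h
    exact separable_of_countable G hG l'
  · rintro ⟨l, hl, h⟩ l' _
    haveI := countable_of_separable G hG l hl h
    exact separable_of_countable G hG l'
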